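/- arXiv:2201.12884 — 5 statements merged into one kernel-verified Lean document; each statement's English description precedes it below -/
import Mathlib

section
/- Let ℓ ≥ 3 and let m be an integer with 0 ≤ m ≤ ℓ − 1. Then there exists a bijection σ from the m-element subsets of the vertex set of the cycle graph C_{2ℓ} to the m-element subsets of the vertex set of the disjoint union C_ℓ ⊔ C_ℓ such that for every m-element subset S of the vertices of C_{2ℓ}, the subgraph of C_{2ℓ} induced on S is isomorphic to the subgraph of C_ℓ ⊔ C_ℓ induced on σ(S). -/
/-- The cycle graph on vertex set `ZMod n`: `i` and `j` are adjacent iff `i - j = ±1`. -/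
def cycle (n : ℕ) : SimpleGraph (ZMod n) :=
  SimpleGraph.fromRel (fun i j => i - j = 1)

/-!
Both `C_{2ℓ}` and `C_ℓ ⊔ C_ℓ` are double covers of `C_ℓ`, and over `C_ℓ` with one vertex `b` removed
they become isomorphic, each being two copies of a path. A set `S` of fewer than `ℓ` vertices misses
the fibre over some `b`, so an isomorphism of covers away from `b` carries the graph induced on `S`
to the one induced on its image. Choosing `b` as a function of the projection of `S` alone, which
`S` shares with its image, makes the resulting map on sets invertible.
-/

section Transport

/-- The bijection that applies `e i` on the level set `f = i`, for a family of bijections `e i` each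
of which carries the invariant `f` to the invariant `g`. -/
def equivOfInvariant {α β ι : Type*} (f : α → ι) (g : β → ι) (e : ι → α ≃ β)
    (hfg : ∀ i a, g (e i a) = f a) : α ≃ β where
  toFun a := e (f a) a
  invFun b := (e (g b)).symm b
  left_inv a := by simp only [hfg, Equiv.symm_apply_apply]
  right_inv b := by
    have hf : f ((e (g b)).symm b) = g b := by rw [← hfg (g b), Equiv.apply_symm_apply]
    simp only [hf, Equiv.apply_symm_apply]

variable {V W B : Type*} {G : SimpleGraph V} {H : SimpleGraph W}

/-- The isomorphism of induced subgraphs given by a bijection of the vertices that carries `S` to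
`T` and respects adjacency on `S`. -/
def induceIsoOfAdjIff (φ : V ≃ W) {S : Set V} {T : Set W} (hST : ∀ x, x ∈ S ↔ φ x ∈ T)
    (hadj : ∀ x ∈ S, ∀ y ∈ S, (H.Adj (φ x) (φ y) ↔ G.Adj x y)) : G.induce S ≃g H.induce T where
  toEquiv := φ.subtypeEquiv hST
  map_rel_iff' {x y} := hadj x x.2 y y.2

theorem exists_forall_card_lt_notMem (B : Type*) [Fintype B] [Nonempty B] :
    ∃ c : Finset B → B, ∀ T : Finset B, T.card < Fintype.card B → c T ∉ T :=
  ⟨fun T ↦ Classical.epsilon (· ∉ T), fun T hT ↦ Classical.epsilon_spec <| by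
    simpa using Finset.exists_mem_notMem_of_card_lt_card (t := Finset.univ) hT⟩

theorem exists_equiv_induce_iso_of_card_lt [Fintype B] {m : ℕ} (hm : m < Fintype.card B)
    (π : V → B) (p : W → B) (φ : B → V ≃ W) (hφ : ∀ b v, p (φ b v) = π v)
    (hadj : ∀ b x y, π x ≠ b → π y ≠ b → (H.Adj (φ b x) (φ b y) ↔ G.Adj x y)) :
    ∃ σ : {S : Finset V // S.card = m} ≃ {S : Finset W // S.card = m},
      ∀ S : {S : Finset V // S.card = m},
        Nonempty (G.induce (S.1 : Set V) ≃g H.induce ((σ S).1 : Set W)) := by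
  classical
  have : Nonempty B := Fintype.card_pos_iff.1 (Nat.zero_lt_of_lt hm)
  obtain ⟨c, hc⟩ := exists_forall_card_lt_notMem B
  let e (b : B) : {S : Finset V // S.card = m} ≃ {S : Finset W // S.card = m} :=
    (φ b).finsetCongr.subtypeEquiv fun S ↦ by simp
  have image_e (b : B) (S) : (e b S).1.image p = S.1.image π := by
    simp [e, Finset.map_eq_image, Finset.image_image, Function.comp_def, hφ]
  refine ⟨equivOfInvariant (fun S ↦ c (S.1.image π)) (fun T ↦ c (T.1.image p)) e
    fun b S ↦ congrArg c (image_e b S), fun S ↦ ⟨?_⟩⟩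
  have hb : c (S.1.image π) ∉ S.1.image π :=
    hc _ (Finset.card_image_le.trans_lt (S.2.trans_lt hm))
  have hne (x : V) (hx : x ∈ S.1) : π x ≠ c (S.1.image π) :=
    ne_of_mem_of_not_mem (Finset.mem_image_of_mem π hx) hb
  exact induceIsoOfAdjIff (φ (c (S.1.image π))) (fun x ↦ by simp [equivOfInvariant, e])
    fun x hx y hy ↦ hadj _ x y (hne x hx) (hne y hy)

end Transport

section Cycle

theorem cycle_adj_add_right {n : ℕ} (a x y : ZMod n) :
    (cycle n).Adj (x + a) (y + a) ↔ (cycle n).Adj x y := by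
  simp [cycle]

theorem sum_cycle_adj_map_add_right {n : ℕ} (a : ZMod n) (u v : ZMod n ⊕ ZMod n) :
    (cycle n ⊕g cycle n).Adj (u.map (· + a) (· + a)) (v.map (· + a) (· + a)) ↔
      (cycle n ⊕g cycle n).Adj u v := by
  rcases u with x | x <;> rcases v with y | y <;> simp [cycle_adj_add_right]

theorem sub_eq_one_iff_val_eq_of_ne_zero {n : ℕ} [NeZero n] {x : ZMod n} (hx : x ≠ 0) (y : ZMod n) :
    x - y = 1 ↔ x.val = y.val + 1 := by
  have hcast : x - y = 1 ↔ x = (y.val + 1 : ℕ) := by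
    rw [Nat.cast_succ, ZMod.natCast_zmod_val, sub_eq_iff_eq_add']
  rw [hcast]
  rcases (Nat.succ_le_of_lt y.val_lt).lt_or_eq with hlt | heq
  · rw [← (ZMod.val_injective n).eq_iff, ZMod.val_natCast_of_lt hlt]
  · rw [← Nat.succ_eq_add_one, heq, ZMod.natCast_self]
    exact iff_of_false hx x.val_lt.ne

theorem cycle_adj_iff_val_of_ne_zero {n : ℕ} [NeZero n] {x y : ZMod n} (hx : x ≠ 0) (hy : y ≠ 0) :
    (cycle n).Adj x y ↔ x.val = y.val + 1 ∨ y.val = x.val + 1 := by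
  rw [cycle, SimpleGraph.fromRel_adj, sub_eq_one_iff_val_eq_of_ne_zero hx,
    sub_eq_one_iff_val_eq_of_ne_zero hy]
  exact and_iff_right_of_imp (by rintro h rfl; omega)

variable {ℓ : ℕ}

/-- Two copies of `ZMod ℓ` laid end to end: the representatives `0, …, ℓ - 1` in the first copy
stay in place, those in the second copy are moved up by `ℓ`. -/
def endToEnd : ZMod ℓ ⊕ ZMod ℓ → ZMod (2 * ℓ) :=
  Sum.elim (fun a ↦ (a.val : ℕ)) (fun a ↦ (a.val + ℓ : ℕ))

variable [NeZero ℓ]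

theorem val_endToEnd_inl (a : ZMod ℓ) : (endToEnd (.inl a)).val = a.val :=
  ZMod.val_natCast_of_lt (by have := a.val_lt; omega)

theorem val_endToEnd_inr (a : ZMod ℓ) : (endToEnd (.inr a)).val = a.val + ℓ :=
  ZMod.val_natCast_of_lt (by have := a.val_lt; omega)

theorem endToEnd_bijective : Function.Bijective (endToEnd (ℓ := ℓ)) := by
  rw [Fintype.bijective_iff_injective_and_card]
  refine ⟨fun u v h ↦ ?_, by simp [two_mul]⟩
  have hval := congrArg ZMod.val h
  rcases u with a | a <;> rcases v with b | b <;>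
    simp only [val_endToEnd_inl, val_endToEnd_inr] at hval
  · rw [ZMod.val_injective ℓ hval]
  · have := a.val_lt; omega
  · have := b.val_lt; omega
  · rw [ZMod.val_injective ℓ (Nat.add_right_cancel hval)]

theorem castHom_endToEnd (u : ZMod ℓ ⊕ ZMod ℓ) :
    ZMod.castHom (dvd_mul_left ℓ 2) (ZMod ℓ) (endToEnd u) = Sum.elim id id u := by
  rcases u with a | a <;>
    simp only [endToEnd, Sum.elim_inl, Sum.elim_inr, id_eq, map_natCast, Nat.cast_add,
      map_add, CharP.cast_eq_zero, add_zero, ZMod.natCast_zmod_val]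

theorem endToEnd_adj_iff {u v : ZMod ℓ ⊕ ZMod ℓ} (hu : Sum.elim id id u ≠ 0)
    (hv : Sum.elim id id v ≠ 0) :
    (cycle (2 * ℓ)).Adj (endToEnd u) (endToEnd v) ↔ (cycle ℓ ⊕g cycle ℓ).Adj u v := by
  have endToEnd_ne_zero {w : ZMod ℓ ⊕ ZMod ℓ} (hw : Sum.elim id id w ≠ 0) : endToEnd w ≠ 0 := by
    rw [← castHom_endToEnd] at hw
    exact ne_zero_of_map hw
  rw [cycle_adj_iff_val_of_ne_zero (endToEnd_ne_zero hu) (endToEnd_ne_zero hv)]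
  -- Every edge between the two copies ends at the first vertex of one of them, which lies over `0`.
  have no_cross {a b : ZMod ℓ} (hb : b ≠ 0) : ¬(a.val = b.val + ℓ + 1 ∨ b.val + ℓ = a.val + 1) := by
    have := a.val_lt
    have := ZMod.val_pos.2 hb
    omega
  rcases u with a | a <;> rcases v with b | b <;>
    simp only [Sum.elim_inl, Sum.elim_inr, id_eq] at hu hv <;>
    simp only [val_endToEnd_inl, val_endToEnd_inr]
  · rw [SimpleGraph.sum_adj_inl, cycle_adj_iff_val_of_ne_zero hu hv]
  · exact iff_of_false (no_cross hv) (by simp)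
  · exact iff_of_false (fun h ↦ no_cross hu h.symm) (by simp)
  · rw [SimpleGraph.sum_adj_inr, cycle_adj_iff_val_of_ne_zero hu hv]
    omega

/-- The bijection between the vertices of `C_{2ℓ}` and of `C_ℓ ⊔ C_ℓ` that cuts the cycles open at
the vertices over `b` and identifies the resulting pairs of paths. -/
noncomputable def cutEquiv (b : ZMod ℓ) : ZMod (2 * ℓ) ≃ ZMod ℓ ⊕ ZMod ℓ :=
  (Equiv.subRight b.cast).trans <| (Equiv.ofBijective endToEnd endToEnd_bijective).symm.trans <|
    (Equiv.addRight b).sumCongr (Equiv.addRight b)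

theorem cutEquiv_endToEnd_add (b : ZMod ℓ) (u : ZMod ℓ ⊕ ZMod ℓ) :
    cutEquiv b (endToEnd u + b.cast) = u.map (· + b) (· + b) := by
  simp [cutEquiv]

theorem exists_endToEnd_add_eq (b : ZMod ℓ) (x : ZMod (2 * ℓ)) :
    ∃ u : ZMod ℓ ⊕ ZMod ℓ, endToEnd u + b.cast = x :=
  (endToEnd_bijective.surjective (x - b.cast)).imp fun _ hu ↦ by rw [hu, sub_add_cancel]

theorem castHom_endToEnd_add (b : ZMod ℓ) (u : ZMod ℓ ⊕ ZMod ℓ) :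
    ZMod.castHom (dvd_mul_left ℓ 2) (ZMod ℓ) (endToEnd u + b.cast) = Sum.elim id id u + b := by
  rw [map_add, castHom_endToEnd, ZMod.ringHom_map_cast]

theorem elim_cutEquiv (b : ZMod ℓ) (x : ZMod (2 * ℓ)) :
    Sum.elim id id (cutEquiv b x) = ZMod.castHom (dvd_mul_left ℓ 2) (ZMod ℓ) x := by
  obtain ⟨u, rfl⟩ := exists_endToEnd_add_eq b x
  rw [cutEquiv_endToEnd_add, castHom_endToEnd_add]
  rcases u with a | a <;> rfl

theorem cutEquiv_adj_iff (b : ZMod ℓ) (x y : ZMod (2 * ℓ))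
    (hx : ZMod.castHom (dvd_mul_left ℓ 2) (ZMod ℓ) x ≠ b)
    (hy : ZMod.castHom (dvd_mul_left ℓ 2) (ZMod ℓ) y ≠ b) :
    (cycle ℓ ⊕g cycle ℓ).Adj (cutEquiv b x) (cutEquiv b y) ↔ (cycle (2 * ℓ)).Adj x y := by
  obtain ⟨u, rfl⟩ := exists_endToEnd_add_eq b x
  obtain ⟨v, rfl⟩ := exists_endToEnd_add_eq b y
  rw [castHom_endToEnd_add, Ne, add_eq_right] at hx hy
  rw [cutEquiv_endToEnd_add, cutEquiv_endToEnd_add, sum_cycle_adj_map_add_right,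
    cycle_adj_add_right, endToEnd_adj_iff hx hy]

end Cycle

/-- For `ℓ ≥ 3` and `0 ≤ m ≤ ℓ - 1`, there is a bijection `σ` from the `m`-element subsets of
the vertices of `C_{2ℓ}` to the `m`-element subsets of the vertices of `C_ℓ ⊔ C_ℓ` such that
the subgraph induced on `S` is isomorphic to the subgraph induced on `σ S`. -/
theorem stmt0 (ℓ m : ℕ) (hℓ : 3 ≤ ℓ) (hm : m ≤ ℓ - 1) :
    ∃ σ : {S : Finset (ZMod (2 * ℓ)) // S.card = m} ≃
          {S : Finset (ZMod ℓ ⊕ ZMod ℓ) // S.card = m},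
      ∀ S : {S : Finset (ZMod (2 * ℓ)) // S.card = m},
        Nonempty (((cycle (2 * ℓ)).induce (S.1 : Set (ZMod (2 * ℓ)))) ≃g
          ((cycle ℓ ⊕g cycle ℓ).induce ((σ S).1 : Set (ZMod ℓ ⊕ ZMod ℓ)))) := by
  have : NeZero ℓ := ⟨by omega⟩
  have hm' : m < Fintype.card (ZMod ℓ) := by rw [ZMod.card]; omega
  exact exists_equiv_induce_iso_of_card_lt hm' _ _ cutEquiv elim_cutEquiv cutEquiv_adj_iff
end

section
/- Let ℓ ≥ 3 and let m be an integer with 1 ≤ m ≤ ℓ. Let G₁ be the cone over C_ℓ ⊔ C_ℓ with apex u₁, and let G₂ be the cone over C_{2ℓ} with apex u₂. Then there exists a bijection σ from the m-element subsets of the vertices of G₁ that contain u₁ to the m-element subsets of the vertices of G₂ that contain u₂, such that for every such subset S, the subgraph of G₁ induced on S is isomorphic to the subgraph of G₂ induced on σ(S) via an isomorphism sending u₁ to u₂. -/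
/-- The cone over a graph `G`: a new apex vertex `none` adjacent to every vertex of `G`. -/
def cone {α : Type*} (G : SimpleGraph α) : SimpleGraph (Option α) where
  Adj x y := match x, y with
    | none, none => False
    | none, some _ => True
    | some _, none => True
    | some a, some b => G.Adj a b
  symm := by constructor; rintro (_|a) (_|b) h <;> simp_all <;> exact h.symm
  loopless := by constructor; rintro (_|a) h <;> simp_all

/-!
Both `C_ℓ ⊔ C_ℓ` and `C_{2ℓ}` are double coverings of `C_ℓ`. Away from the fibre over any one
vertex `i` both coverings are trivial, hence isomorphic over `C_ℓ`. A set of at most `ℓ` vertices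
containing the apex has at most `ℓ - 1` others, so its projection to `C_ℓ` misses some vertex;
transport it along an isomorphism away from a missed vertex. If that vertex is chosen as a function
of the projection alone, the transport can be undone, because it preserves projections.
-/

open Finset

section IsoOff

variable {V W I : Type*}

/-- `e` is an isomorphism from `G` to `H` away from the fibre of `p` over `i`: it preserves and
reflects adjacency between vertices of `G` outside that fibre. The intended `p` is a covering
projection. Nothing is required of `e` on the fibre itself beyond bijectivity. -/
def IsIsoOff (G : SimpleGraph V) (H : SimpleGraph W) (p : V → I) (i : I) (e : V ≃ W) : Prop :=
  ∀ ⦃x y⦄, p x ≠ i → p y ≠ i → (H.Adj (e x) (e y) ↔ G.Adj x y)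

namespace IsIsoOff

variable {G : SimpleGraph V} {H : SimpleGraph W} {p : V → I} {i : I} {e : V ≃ W}

theorem cone (h : IsIsoOff G H p i e) :
    IsIsoOff (cone G) (cone H) (Option.map p) (some i) e.optionCongr := by
  rintro (_ | x) (_ | y) hx hy
  · exact Iff.rfl
  · exact Iff.rfl
  · exact Iff.rfl
  · exact h (fun hxi => hx (congrArg some hxi)) (fun hyi => hy (congrArg some hyi))

/-- The isomorphism of induced subgraphs that `e` restricts to on a set of vertices avoiding the
fibre over `i`. -/
def induceIso [DecidableEq I] (h : IsIsoOff G H p i e) (S : Finset V) (hS : i ∉ S.image p) :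
    G.induce (S : Set V) ≃g H.induce (S.map e.toEmbedding : Set W) where
  toEquiv := e.subtypeEquiv fun x => (mem_map' e.toEmbedding (a := x)).symm
  map_rel_iff' {x y} :=
    h (ne_of_mem_of_not_mem (mem_image_of_mem p x.2) hS)
      (ne_of_mem_of_not_mem (mem_image_of_mem p y.2) hS)

end IsIsoOff

theorem image_map_equiv [DecidableEq I] {p : V → I} {q : W → I} {e : V ≃ W}
    (he : ∀ x, q (e x) = p x) (S : Finset V) : (S.map e.toEmbedding).image q = S.image p :=
  coe_injective <| by simp [Set.image_image, he]

/-- The bijection between finite subsets that transports `S` along `e (p S)`, where each `e T` is a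
bijection over `I`. The image in `I`, which determines the bijection to use, is the same before and
after transport. -/
def finsetEquivOver [DecidableEq I] (p : V → I) (q : W → I) (e : Finset I → V ≃ W)
    (he : ∀ T x, q (e T x) = p x) : Finset V ≃ Finset W where
  toFun S := S.map (e (S.image p)).toEmbedding
  invFun S := S.map (e (S.image q)).symm.toEmbedding
  left_inv S := by
    simp [image_map_equiv (he (S.image p)), map_map]
  right_inv S := by
    have he_symm (x : W) : p ((e (S.image q)).symm x) = q x := by
      simp [← he (S.image q)]
    simp [image_map_equiv he_symm, map_map]

theorem exists_some_notMem [Fintype I] (T : Finset (Option I)) (hnone : none ∈ T)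
    (hT : T.card ≤ Fintype.card I) : ∃ i, some i ∉ T := by
  by_contra! hsome
  have hcard : T.card = Fintype.card I + 1 := by
    rw [eq_univ_of_forall (Option.forall.2 ⟨hnone, hsome⟩), card_univ, Fintype.card_option]
  omega

theorem exists_equiv_forall_cone_induce_iso [Fintype I] [Nonempty I] {G : SimpleGraph V}
    {H : SimpleGraph W} {p : V → I} {q : W → I} {e : I → V ≃ W} (hproj : ∀ i x, q (e i x) = p x)
    (hiso : ∀ i, IsIsoOff G H p i (e i)) {m : ℕ} (hm : m ≤ Fintype.card I) :
    ∃ σ : {S : Finset (Option V) // S.card = m ∧ none ∈ S} ≃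
          {S : Finset (Option W) // S.card = m ∧ none ∈ S},
      ∀ S, ∃ f : (cone G).induce (S.1 : Set (Option V)) ≃g
          (cone H).induce ((σ S).1 : Set (Option W)),
        f ⟨none, S.2.2⟩ = ⟨none, (σ S).2.2⟩ := by
  classical
  choose! missed hmissed using exists_some_notMem (I := I)
  let σ : Finset (Option V) ≃ Finset (Option W) :=
    finsetEquivOver (Option.map p) (Option.map q) (fun T => (e (missed T)).optionCongr) <| by
      rintro T (_ | x)
      · rfl
      · exact congrArg some (hproj _ x)
  have hσ (S : Finset (Option V)) : S.card = m ∧ none ∈ S ↔ (σ S).card = m ∧ none ∈ σ S := by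
    simp [σ, finsetEquivOver, ← Equiv.optionCongr_symm]
  refine ⟨σ.subtypeEquiv hσ, fun ⟨S, hcard, hnone⟩ => ?_⟩
  have hS : some (missed (S.image (Option.map p))) ∉ S.image (Option.map p) :=
    hmissed _ (mem_image_of_mem _ hnone) (card_image_le.trans (hcard.trans_le hm))
  exact ⟨(hiso _).cone.induceIso S hS, rfl⟩

end IsoOff

theorem fromRel_sum_fromRel {V W : Type*} (r : V → V → Prop) (s : W → W → Prop) :
    SimpleGraph.fromRel r ⊕g SimpleGraph.fromRel s = SimpleGraph.fromRel (Sum.LiftRel r s) := by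
  ext (x | x) (y | y) <;> simp

section Cycle

variable {ℓ : ℕ}

/-- The lift to `R` of a vertex `j` of the cycle cut open at `i`: the natural number representing
`j` in the interval `[i, i + ℓ)`, where `i` stands for its representative in `[0, ℓ)`. -/
def cutLift (R : Type*) [NatCast R] (i j : ZMod ℓ) : R :=
  ((i.val + (j - i).val : ℕ) : R)

theorem map_cutLift [NeZero ℓ] {R : Type*} [NonAssocSemiring R] (f : R →+* ZMod ℓ) (i j : ZMod ℓ) :
    f (cutLift R i j) = j := by
  simp [cutLift]

theorem cutLift_sub_cutLift [NeZero ℓ] (R : Type*) [AddCommGroupWithOne R] {i a b : ZMod ℓ}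
    (ha : a ≠ i) (hab : a - b = 1) : cutLift R i a - cutLift R i b = 1 := by
  have cast_succ : (((b - i).val + 1 : ℕ) : ZMod ℓ) = a - i := by
    rw [Nat.cast_succ, ZMod.natCast_zmod_val, ← hab]
    abel
  have succ_ne : (b - i).val + 1 ≠ ℓ := fun h => ha <| by
    rw [← sub_eq_zero, ← cast_succ, h, ZMod.natCast_self]
  have val_succ : (a - i).val = (b - i).val + 1 := by
    rw [← cast_succ, ZMod.val_cast_of_lt (by have := ZMod.val_lt (b - i); omega)]
  simp [cutLift, val_succ]

/-- The double covering `C_ℓ ⊔ C_ℓ → C_ℓ` on vertices. -/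
def trivialCoverProj (ℓ : ℕ) : ZMod ℓ ⊕ ZMod ℓ → ZMod ℓ :=
  Sum.elim id id

/-- The connected double covering `C_{2ℓ} → C_ℓ` on vertices, reduction modulo `ℓ`. -/
def connectedCoverProj (ℓ : ℕ) : ZMod (2 * ℓ) →+* ZMod ℓ :=
  ZMod.castHom (dvd_mul_left ℓ 2) (ZMod ℓ)

/-- The comparison of the two double coverings of `C_ℓ` cut open at `i`: the two sheets of
`C_ℓ ⊔ C_ℓ` are laid end to end around `C_{2ℓ}`, each starting at its vertex over `i`. -/
def unrollAt (i : ZMod ℓ) : ZMod ℓ ⊕ ZMod ℓ → ZMod (2 * ℓ) :=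
  Sum.elim (cutLift _ i) (fun j => cutLift _ i j + ℓ)

theorem connectedCoverProj_unrollAt [NeZero ℓ] (i : ZMod ℓ) (x : ZMod ℓ ⊕ ZMod ℓ) :
    connectedCoverProj ℓ (unrollAt i x) = trivialCoverProj ℓ x := by
  cases x <;> simp [unrollAt, trivialCoverProj, map_cutLift]

theorem natCast_ne_zero_zmod_two_mul (ℓ : ℕ) [NeZero ℓ] : (ℓ : ZMod (2 * ℓ)) ≠ 0 := by
  rw [Ne, ZMod.natCast_eq_zero_iff]
  exact Nat.not_dvd_of_pos_of_lt (NeZero.pos ℓ) (by have := NeZero.pos ℓ; omega)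

theorem unrollAt_injective [NeZero ℓ] (i : ZMod ℓ) : Function.Injective (unrollAt i) := by
  intro x y hxy
  have hproj : trivialCoverProj ℓ x = trivialCoverProj ℓ y := by
    rw [← connectedCoverProj_unrollAt i, hxy, connectedCoverProj_unrollAt]
  rcases x with a | a <;> rcases y with b | b <;> obtain rfl : a = b := hproj
  · rfl
  · exact absurd (left_eq_add.1 hxy) (natCast_ne_zero_zmod_two_mul ℓ)
  · exact absurd (add_eq_left.1 hxy) (natCast_ne_zero_zmod_two_mul ℓ)
  · rfl

theorem unrollAt_bijective [NeZero ℓ] (i : ZMod ℓ) : Function.Bijective (unrollAt i) :=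
  (Fintype.bijective_iff_injective_and_card _).2
    ⟨unrollAt_injective i, by simp [ZMod.card, two_mul]⟩

theorem unrollAt_sub_unrollAt_eq_one_iff [NeZero ℓ] {i : ZMod ℓ} {x y : ZMod ℓ ⊕ ZMod ℓ}
    (hx : trivialCoverProj ℓ x ≠ i) :
    unrollAt i x - unrollAt i y = 1 ↔
      Sum.LiftRel (fun a b => a - b = 1) (fun a b => a - b = 1) x y := by
  have base_step (h : unrollAt i x - unrollAt i y = 1) :
      trivialCoverProj ℓ x - trivialCoverProj ℓ y = 1 := by
    simpa [connectedCoverProj_unrollAt] using congrArg (connectedCoverProj ℓ) h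
  have lift_step {a b : ZMod ℓ} (ha : a ≠ i) (hab : a - b = 1) :=
    cutLift_sub_cutLift (ZMod (2 * ℓ)) ha hab
  -- A step between the two sheets would project to a step of `C_ℓ`, which also lifts within one
  -- sheet, so the offset `ℓ` of the sheets would vanish in `ZMod (2 * ℓ)`.
  rcases x with a | a <;> rcases y with b | b <;>
    simp only [unrollAt, trivialCoverProj, Sum.elim_inl, Sum.elim_inr, id_eq,
      add_sub_add_right_eq_sub, Sum.liftRel_inl_inl, Sum.liftRel_inr_inr, Sum.not_liftRel_inl_inr,
      Sum.not_liftRel_inr_inl, iff_false] at hx base_step ⊢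
  · exact ⟨base_step, lift_step hx⟩
  · refine fun h => natCast_ne_zero_zmod_two_mul ℓ ?_
    linear_combination lift_step hx (base_step h) - h
  · refine fun h => natCast_ne_zero_zmod_two_mul ℓ ?_
    linear_combination h - lift_step hx (base_step h)
  · exact ⟨base_step, lift_step hx⟩

theorem isIsoOff_unrollAt [NeZero ℓ] (i : ZMod ℓ) :
    IsIsoOff (cycle ℓ ⊕g cycle ℓ) (cycle (2 * ℓ)) (trivialCoverProj ℓ) i
      (Equiv.ofBijective _ (unrollAt_bijective i)) := by
  intro x y hx hy
  simp only [cycle, fromRel_sum_fromRel, SimpleGraph.fromRel_adj, Equiv.ofBijective_apply,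
    (unrollAt_injective i).ne_iff, unrollAt_sub_unrollAt_eq_one_iff hx,
    unrollAt_sub_unrollAt_eq_one_iff hy]

end Cycle

/-- For `ℓ ≥ 3` and `1 ≤ m ≤ ℓ`, there is a bijection `σ` from the `m`-element subsets of the
cone over `C_ℓ ⊔ C_ℓ` containing the apex to the `m`-element subsets of the cone over `C_{2ℓ}`
containing the apex, such that the induced subgraphs on `S` and `σ S` are isomorphic via an
isomorphism mapping apex to apex. -/
theorem stmt1 (ℓ m : ℕ) (hℓ : 3 ≤ ℓ) (hm1 : 1 ≤ m) (hm2 : m ≤ ℓ) :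
    ∃ σ : {S : Finset (Option (ZMod ℓ ⊕ ZMod ℓ)) // S.card = m ∧ none ∈ S} ≃
          {S : Finset (Option (ZMod (2 * ℓ))) // S.card = m ∧ none ∈ S},
      ∀ S : {S : Finset (Option (ZMod ℓ ⊕ ZMod ℓ)) // S.card = m ∧ none ∈ S},
        ∃ e : ((cone (cycle ℓ ⊕g cycle ℓ)).induce (S.1 : Set (Option (ZMod ℓ ⊕ ZMod ℓ)))) ≃g
              ((cone (cycle (2 * ℓ))).induce ((σ S).1 : Set (Option (ZMod (2 * ℓ))))),
          e ⟨none, S.2.2⟩ = ⟨none, (σ S).2.2⟩ := by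
  have : NeZero ℓ := ⟨by omega⟩
  exact exists_equiv_forall_cone_induce_iso connectedCoverProj_unrollAt isIsoOff_unrollAt
    (hm2.trans_eq (ZMod.card ℓ).symm)
end

section
/- For every ℓ ≥ 3, the cone over the disjoint union C_ℓ ⊔ C_ℓ is not isomorphic to the cone over the cycle graph C_{2ℓ}. -/
/-!
Cones can be cancelled: `cone G ≃g cone H` implies `G ≃g H`. An isomorphism `φ` of cones need not
fix the apex, but if it does not, then the vertex `a` with `φ a = apex` is, like the apex, adjacent
to all other vertices, so that redirecting `a` to `φ apex` is still an isomorphism. A disjoint union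
of two nonempty graphs is not connected, whereas a cycle is, so they have non-isomorphic cones.
-/

section Cancellation

variable {α β : Type*} {G : SimpleGraph α} {H : SimpleGraph β}

theorem cone_adj_some_some {a b : α} : (cone G).Adj (some a) (some b) ↔ G.Adj a b :=
  Iff.rfl

theorem cone_isUniversal_none : (cone G).IsUniversal none
  | none, h => (h rfl).elim
  | some _, _ => trivial

theorem adj_iff_ne_of_isUniversal {a b : α} (ha : G.IsUniversal a) : G.Adj a b ↔ a ≠ b :=
  ⟨SimpleGraph.Adj.ne, fun hab => ha hab⟩

theorem isUniversal_of_coneIso_eq_none (φ : cone G ≃g cone H) {a : α} (ha : φ (some a) = none) :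
    G.IsUniversal a := by
  intro b hab
  have hne : none ≠ φ (some b) := fun hb =>
    hab (Option.some_injective _ (φ.injective (ha.trans hb)))
  rw [← cone_adj_some_some, ← φ.map_adj_iff, ha]
  exact cone_isUniversal_none hne

theorem removeNone_adj_iff_of_eq_none (φ : cone G ≃g cone H) {a : α} (ha : φ (some a) = none)
    (b : α) :
    H.Adj (φ.toEquiv.removeNone a) (φ.toEquiv.removeNone b) ↔ G.Adj a b := by
  have himage : φ none = some (φ.toEquiv.removeNone a) := (φ.toEquiv.removeNone_none ha).symm
  have hsymm : φ.symm (some (φ.toEquiv.removeNone a)) = none := by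
    rw [← himage, φ.symm_apply_apply]
  rw [adj_iff_ne_of_isUniversal (isUniversal_of_coneIso_eq_none φ ha),
    adj_iff_ne_of_isUniversal (isUniversal_of_coneIso_eq_none φ.symm hsymm),
    φ.toEquiv.removeNone.injective.ne_iff]

/-- The isomorphism of base graphs induced by an isomorphism of their cones: it agrees with `φ`,
except that the vertex sent to the apex, if there is one, is sent to the image of the apex. -/
def coneIsoCancel (φ : cone G ≃g cone H) : G ≃g H where
  toEquiv := φ.toEquiv.removeNone
  map_rel_iff' {a b} := by
    rcases ha : φ (some a) with _ | a'
    · exact removeNone_adj_iff_of_eq_none φ ha b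
    rcases hb : φ (some b) with _ | b'
    · rw [H.adj_comm, G.adj_comm]
      exact removeNone_adj_iff_of_eq_none φ hb a
    · rw [← cone_adj_some_some, φ.toEquiv.removeNone_some ⟨a', ha⟩,
        φ.toEquiv.removeNone_some ⟨b', hb⟩]
      exact φ.map_adj_iff

end Cancellation

theorem cycle_reachable_add_one (n : ℕ) (x : ZMod n) : (cycle n).Reachable x (x + 1) := by
  by_cases hx : x = x + 1
  · exact hx ▸ .rfl
  · exact SimpleGraph.Adj.reachable ⟨hx, Or.inr (add_sub_cancel_left x 1)⟩

theorem cycle_reachable_zero_intCast (n : ℕ) (k : ℤ) : (cycle n).Reachable 0 (k : ZMod n) := by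
  induction k with
  | zero => exact Int.cast_zero (R := ZMod n) ▸ .rfl
  | succ k ih =>
    rw [Int.cast_add, Int.cast_one]
    exact ih.trans (cycle_reachable_add_one n _)
  | pred k ih =>
    have hstep : (cycle n).Reachable ((-k - 1 : ℤ) : ZMod n) ((-k : ℤ) : ZMod n) := by
      simpa using cycle_reachable_add_one n ((-k - 1 : ℤ) : ZMod n)
    exact ih.trans hstep.symm

theorem cycle_preconnected (n : ℕ) : (cycle n).Preconnected := by
  intro x y
  obtain ⟨k, rfl⟩ := ZMod.intCast_surjective x
  obtain ⟨m, rfl⟩ := ZMod.intCast_surjective y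
  exact (cycle_reachable_zero_intCast n k).symm.trans (cycle_reachable_zero_intCast n m)

theorem stmt4_general {α β γ : Type*} [Nonempty α] [Nonempty β] (G : SimpleGraph α)
    (H : SimpleGraph β) {K : SimpleGraph γ} (hK : K.Preconnected) :
    IsEmpty (cone (G ⊕g H) ≃g cone K) :=
  ⟨fun φ => SimpleGraph.not_preconnected_sum ((coneIsoCancel φ).preconnected_iff.mpr hK)⟩

/-- For every `ℓ ≥ 3`, the cone over `C_ℓ ⊔ C_ℓ` is not isomorphic to the cone over `C_{2ℓ}`. -/
theorem stmt4 (ℓ : ℕ) (hℓ : 3 ≤ ℓ) :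
    IsEmpty ((cone (cycle ℓ ⊕g cycle ℓ)) ≃g (cone (cycle (2 * ℓ)))) :=
  stmt4_general _ _ (cycle_preconnected _)
end

section
/- The Rook's 4×4 graph and the Shrikhande graph are not isomorphic. -/
/-- The Rook's 4×4 graph `K₄ □ K₄`: vertices `Fin 4 × Fin 4`, with `(a,b)` adjacent to `(c,d)`
iff (`a = c` and `b ≠ d`) or (`b = d` and `a ≠ c`). -/
def rook : SimpleGraph (Fin 4 × Fin 4) where
  Adj v w := (v.1 = w.1 ∧ v.2 ≠ w.2) ∨ (v.2 = w.2 ∧ v.1 ≠ w.1)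
  symm := by
    constructor
    rintro v w (⟨h1, h2⟩ | ⟨h1, h2⟩)
    exacts [Or.inl ⟨h1.symm, h2.symm⟩, Or.inr ⟨h1.symm, h2.symm⟩]
  loopless := by constructor; rintro v (⟨_, h⟩ | ⟨_, h⟩) <;> exact h rfl

instance : DecidableRel rook.Adj := fun v w =>
  decidable_of_iff ((v.1 = w.1 ∧ v.2 ≠ w.2) ∨ (v.2 = w.2 ∧ v.1 ≠ w.1)) Iff.rfl

/-- The adjacency relation of the Shrikhande graph: distinct `v, w : ZMod 4 × ZMod 4` are
adjacent iff `v - w ∈ {(1,0), (3,0), (0,1), (0,3), (1,1), (3,3)}`. -/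
def shrikhandeRel (v w : ZMod 4 × ZMod 4) : Prop :=
  v ≠ w ∧ v - w ∈ ({(1, 0), (3, 0), (0, 1), (0, 3), (1, 1), (3, 3)} : Finset (ZMod 4 × ZMod 4))

instance : DecidableRel shrikhandeRel := fun v w => by unfold shrikhandeRel; infer_instance

/-- The Shrikhande graph on `ZMod 4 × ZMod 4`. -/
def shrikhande : SimpleGraph (ZMod 4 × ZMod 4) where
  Adj := shrikhandeRel
  symm := ⟨fun v w h => (by decide : ∀ a b, shrikhandeRel a b → shrikhandeRel b a) v w h⟩
  loopless := ⟨fun v h => (by decide : ∀ a, ¬shrikhandeRel a a) v h⟩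

instance : DecidableRel shrikhande.Adj := fun v w =>
  inferInstanceAs (Decidable (shrikhandeRel v w))

/-!
A graph homomorphism is injective on cliques. Each row of the rook's graph is a 4-clique, so it is
enough that the Shrikhande graph has none. The latter is the circulant graph of a sum-free set `s`,
and in such a graph the neighbours of `v` split into `v + s` and `v - s`: sum-freeness says that
both parts are independent. Hence every neighbourhood is bipartite, and a 4-clique would put a
triangle in one.
-/

open SimpleGraph

section Clique

variable {V W : Type*} {G : SimpleGraph V} {H : SimpleGraph W} {n : ℕ}

theorem cliqueFree_of_hom (f : G →g H) (hH : H.CliqueFree n) : G.CliqueFree n := by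
  rw [cliqueFree_iff] at hH ⊢
  exact ⟨fun c => hH.elim ⟨f.comp c.toHom, (f.comp c.toHom).injective_of_top_hom⟩⟩

theorem cliqueFree_succ_of_forall_cliqueFreeOn_neighborSet
    (h : ∀ v, G.CliqueFreeOn (G.neighborSet v) n) : G.CliqueFree (n + 1) := by
  classical
  intro t ht
  obtain ⟨v, hv⟩ : t.Nonempty := Finset.card_pos.mp (by rw [ht.card_eq]; exact n.succ_pos)
  have hsub : ↑(t.erase v) ⊆ G.neighborSet v := fun w hw =>
    ht.isClique hv (Finset.mem_of_mem_erase hw) (Finset.ne_of_mem_erase hw).symm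
  exact h v hsub (ht.erase_of_mem hv)

theorem cliqueFree_of_forall_colorable_induce_neighborSet
    (h : ∀ v, (G.induce (G.neighborSet v)).Colorable n) : G.CliqueFree (n + 2) :=
  cliqueFree_succ_of_forall_cliqueFreeOn_neighborSet fun v =>
    (cliqueFree_induce_iff (G := G) _ _).mp ((h v).cliqueFree n.lt_succ_self)

end Clique

section SumFree

/-- A sum-free set: no two of its elements, which may coincide, have their sum in the set.
Sum-freeness of the set of jumps makes the neighbourhoods of a circulant graph bipartite. -/
def IsSumFree {A : Type*} [Add A] (s : Set A) : Prop :=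
  ∀ ⦃x⦄, x ∈ s → ∀ ⦃y⦄, y ∈ s → x + y ∉ s

variable {A : Type*} [AddGroup A] {s : Set A}

theorem IsSumFree.not_circulantGraph_adj_of_sub_mem_right (hs : IsSumFree s) {u v w : A}
    (hu : u - v ∈ s) (hw : w - v ∈ s) : ¬ (circulantGraph s).Adj u w := by
  rintro ⟨-, h | h⟩
  · exact hs h hw (by rwa [sub_add_sub_cancel])
  · exact hs h hu (by rwa [sub_add_sub_cancel])

theorem IsSumFree.not_circulantGraph_adj_of_sub_mem_left (hs : IsSumFree s) {u v w : A}
    (hu : v - u ∈ s) (hw : v - w ∈ s) : ¬ (circulantGraph s).Adj u w := by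
  rintro ⟨-, h | h⟩
  · exact hs hu h (by rwa [sub_add_sub_cancel])
  · exact hs hw h (by rwa [sub_add_sub_cancel])

theorem IsSumFree.colorable_induce_neighborSet_circulantGraph (hs : IsSumFree s) (v : A) :
    ((circulantGraph s).induce ((circulantGraph s).neighborSet v)).Colorable 2 := by
  let sideOf (w : (circulantGraph s).neighborSet v) : Prop := w - v ∈ s
  suffices hvalid : ∀ {u w}, ((circulantGraph s).induce _).Adj u w → sideOf u ≠ sideOf w from
    Fintype.card_prop ▸ (Coloring.mk sideOf hvalid).colorable
  intro u w huw hside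
  by_cases hu : sideOf u
  · have hw : sideOf w := hside ▸ hu
    exact hs.not_circulantGraph_adj_of_sub_mem_right hu hw huw
  · have hw : ¬ sideOf w := hside ▸ hu
    exact hs.not_circulantGraph_adj_of_sub_mem_left
      (u.2.2.resolve_right hu) (w.2.2.resolve_right hw) huw

theorem IsSumFree.cliqueFree_four_circulantGraph (hs : IsSumFree s) :
    (circulantGraph s).CliqueFree 4 :=
  cliqueFree_of_forall_colorable_induce_neighborSet
    hs.colorable_induce_neighborSet_circulantGraph

end SumFree

/-- One element from each pair `±x` of differences defining the Shrikhande graph, chosen so that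
the three representatives form a sum-free set. -/
def shrikhandeJumps : Finset (ZMod 4 × ZMod 4) := {(1, 0), (0, 1), (3, 3)}

theorem isSumFree_shrikhandeJumps : IsSumFree (shrikhandeJumps : Set (ZMod 4 × ZMod 4)) := by
  have h : ∀ x ∈ shrikhandeJumps, ∀ y ∈ shrikhandeJumps, x + y ∉ shrikhandeJumps := by decide
  exact h

theorem shrikhande_eq_circulantGraph : shrikhande = circulantGraph ↑shrikhandeJumps := by
  have mem_jumps_or_neg_mem_jumps (d : ZMod 4 × ZMod 4) :
      d ∈ ({(1, 0), (3, 0), (0, 1), (0, 3), (1, 1), (3, 3)} : Finset (ZMod 4 × ZMod 4)) ↔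
        d ∈ shrikhandeJumps ∨ -d ∈ shrikhandeJumps := by
    decide +revert
  ext v w
  rw [circulantGraph_adj, ← neg_sub v w]
  exact and_congr_right fun _ => mem_jumps_or_neg_mem_jumps (v - w)

theorem shrikhande_cliqueFree_four : shrikhande.CliqueFree 4 :=
  shrikhande_eq_circulantGraph ▸ isSumFree_shrikhandeJumps.cliqueFree_four_circulantGraph

theorem rook_eq_boxProd : rook = (⊤ : SimpleGraph (Fin 4)) □ (⊤ : SimpleGraph (Fin 4)) := by
  ext v w
  simp only [rook, boxProd_adj, top_adj]
  tauto

theorem rook_not_cliqueFree_four : ¬ rook.CliqueFree 4 := by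
  rw [not_cliqueFree_iff_top_isContained, rook_eq_boxProd]
  exact (boxProdRight ⊤ ⊤ 0).isContained

theorem stmt7_general : IsEmpty (rook →g shrikhande) :=
  ⟨fun f => rook_not_cliqueFree_four (cliqueFree_of_hom f shrikhande_cliqueFree_four)⟩

/-- The Rook's 4×4 graph and the Shrikhande graph are not isomorphic. -/
theorem stmt7 : IsEmpty (rook ≃g shrikhande) :=
  ⟨fun e => stmt7_general.elim e.toHom⟩
end

section
/- Let n ≥ 8 be divisible by 4, and let G be the simple graph on vertex set ZMod n whose edges are {i, i+1} for every i ∈ ZMod n, together with {i, i+2} for every i ∈ ZMod n that is congruent to 0 or 1 modulo 4. Then the graph distance in G between the vertices 0 and n/2 is at least n/4. -/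
/-- The base graph of the CFI construction: the cycle on `ZMod n` with edges `{i, i + 1}`,
together with chords `{i, i + 2}` for every `i` congruent to `0` or `1` modulo `4`. -/
def baseGraph (n : ℕ) (h4 : 4 ∣ n) : SimpleGraph (ZMod n) :=
  SimpleGraph.fromRel (fun i j =>
    j = i + 1 ∨
      ((ZMod.castHom h4 (ZMod 4) i = 0 ∨ ZMod.castHom h4 (ZMod 4) i = 1) ∧ j = i + 2))

/-!
The base graph lies between `circulantGraph {1}` and `circulantGraph {1, 2}`. An edge of the larger
graph joins vertices at cyclic distance at most `2`, so a walk of length `l` ends at cyclic distance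
at most `2 * l` from its start; here the cyclic distance of `u` and `v` is
`(v - u).valMinAbs.natAbs`. As `0` and `n / 2` are at cyclic distance `n / 2`, every walk between
them has length at least `n / 4`. Connectedness of the smaller graph is needed because
`SimpleGraph.dist` is `0` between unreachable vertices.
-/

open SimpleGraph

section Walk

variable {V : Type*} {G : SimpleGraph V} {f : V → ℕ} {K : ℕ} {u v : V}

theorem potential_le_add_mul_length (hf : ∀ x y, G.Adj x y → f y ≤ f x + K) (p : G.Walk u v) :
    f v ≤ f u + K * p.length := by
  induction p with
  | nil => simp
  | @cons x y z hxy p ih =>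
    calc f z ≤ f y + K * p.length := ih
      _ ≤ f x + K + K * p.length := by gcongr; exact hf x y hxy
      _ = f x + K * (Walk.cons hxy p).length := by rw [Walk.length_cons]; ring

theorem potential_le_add_mul_dist (hf : ∀ x y, G.Adj x y → f y ≤ f x + K)
    (huv : G.Reachable u v) : f v ≤ f u + K * G.dist u v := by
  obtain ⟨p, hp⟩ := huv.exists_walk_length_eq_dist
  exact hp ▸ potential_le_add_mul_length hf p

end Walk

theorem circulantGraph_preconnected_of_closure_eq_top {A : Type*} [AddGroup A] {s : Set A}
    (hs : AddSubgroup.closure s = ⊤) : (circulantGraph s).Preconnected := by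
  have reachable_add (g : A) : ∀ u, (circulantGraph s).Reachable u (g + u) := by
    have hg : g ∈ AddSubgroup.closure s := hs ▸ AddSubgroup.mem_top g
    induction hg using AddSubgroup.closure_induction with
    | mem x hx =>
      intro u
      obtain rfl | hx0 := eq_or_ne x 0
      · rw [zero_add]
      · exact Adj.reachable (by simp [hx, hx0])
    | zero => simp
    | add x y _ _ ihx ihy =>
      intro u
      rw [add_assoc]
      exact (ihy u).trans (ihx (y + u))
    | neg x _ ih =>
      intro u
      simpa using (ih (-x + u)).symm
  intro u v
  simpa using reachable_add (v - u) u

section ZMod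

variable {n : ℕ}

theorem closure_singleton_one_eq_top : AddSubgroup.closure {(1 : ZMod n)} = ⊤ := by
  refine (AddSubgroup.eq_top_iff' _).2 fun a => ?_
  exact AddSubgroup.mem_closure_singleton.2 ⟨a.valMinAbs, by simp⟩

theorem natAbs_valMinAbs_add_le_add (a b : ZMod n) :
    (a + b).valMinAbs.natAbs ≤ a.valMinAbs.natAbs + b.valMinAbs.natAbs :=
  (ZMod.natAbs_valMinAbs_add_le a b).trans (Int.natAbs_add_le _ _)

theorem natAbs_valMinAbs_natCast_le (a : ℕ) : (a : ZMod n).valMinAbs.natAbs ≤ a := by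
  obtain rfl | hn := eq_or_ne n 0
  · exact (Int.natAbs_natCast a).le
  have : NeZero n := ⟨hn⟩
  obtain ha | ha := le_or_gt a (n / 2)
  · simp [ZMod.valMinAbs_natCast_of_le_half ha]
  · exact (ZMod.natAbs_valMinAbs_le _).trans ha.le

theorem natAbs_valMinAbs_sub_le_mul_dist {s : Set (ZMod n)} {K : ℕ}
    (hs : ∀ x ∈ s, x.valMinAbs.natAbs ≤ K) {u v : ZMod n}
    (huv : (circulantGraph s).Reachable u v) :
    (v - u).valMinAbs.natAbs ≤ K * (circulantGraph s).dist u v := by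
  have jump_le (x y : ZMod n) (hxy : (circulantGraph s).Adj x y) :
      (y - x).valMinAbs.natAbs ≤ K := by
    obtain ⟨-, h | h⟩ := hxy
    · rw [← neg_sub, ZMod.natAbs_valMinAbs_neg]
      exact hs _ h
    · exact hs _ h
  have edge_le (x y : ZMod n) (hxy : (circulantGraph s).Adj x y) :
      (y - u).valMinAbs.natAbs ≤ (x - u).valMinAbs.natAbs + K :=
    calc (y - u).valMinAbs.natAbs = ((x - u) + (y - x)).valMinAbs.natAbs := by
          rw [add_comm, sub_add_sub_cancel]
      _ ≤ (x - u).valMinAbs.natAbs + (y - x).valMinAbs.natAbs := natAbs_valMinAbs_add_le_add _ _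
      _ ≤ (x - u).valMinAbs.natAbs + K := by gcongr; exact jump_le x y hxy
  simpa using potential_le_add_mul_dist (f := fun w => (w - u).valMinAbs.natAbs) edge_le huv

theorem natAbs_valMinAbs_le_two_of_mem {x : ZMod n} (hx : x ∈ ({1, 2} : Set (ZMod n))) :
    x.valMinAbs.natAbs ≤ 2 := by
  obtain rfl | rfl := hx
  · exact le_trans (mod_cast natAbs_valMinAbs_natCast_le 1) one_le_two
  · exact mod_cast natAbs_valMinAbs_natCast_le 2

end ZMod

section BaseGraph

variable {n : ℕ} (h4 : 4 ∣ n)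

theorem circulantGraph_one_le_baseGraph : circulantGraph {1} ≤ baseGraph n h4 := by
  rintro u v ⟨hne, h | h⟩
  · exact ⟨hne, Or.inr (Or.inl (eq_add_of_sub_eq' h))⟩
  · exact ⟨hne, Or.inl (Or.inl (eq_add_of_sub_eq' h))⟩

theorem baseGraph_le_circulantGraph_one_two : baseGraph n h4 ≤ circulantGraph {1, 2} := by
  rintro u v ⟨hne, (rfl | ⟨-, rfl⟩) | (rfl | ⟨-, rfl⟩)⟩ <;> simp_all

end BaseGraph

theorem stmt18_general (n : ℕ) {G : SimpleGraph (ZMod n)} (hlower : circulantGraph {1} ≤ G)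
    (hupper : G ≤ circulantGraph {1, 2}) : n / 4 ≤ G.dist 0 ((n / 2 : ℕ) : ZMod n) := by
  have hreach : G.Reachable 0 ((n / 2 : ℕ) : ZMod n) :=
    (circulantGraph_preconnected_of_closure_eq_top closure_singleton_one_eq_top).mono hlower _ _
  have half_le : n / 2 ≤ 2 * G.dist 0 ((n / 2 : ℕ) : ZMod n) :=
    calc n / 2 = (((n / 2 : ℕ) : ZMod n) - 0).valMinAbs.natAbs := by
          rw [sub_zero, ZMod.valMinAbs_natCast_of_le_half le_rfl, Int.natAbs_natCast]
      _ ≤ 2 * (circulantGraph {1, 2}).dist 0 ((n / 2 : ℕ) : ZMod n) :=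
          natAbs_valMinAbs_sub_le_mul_dist (fun _ => natAbs_valMinAbs_le_two_of_mem)
            (hreach.mono hupper)
      _ ≤ 2 * G.dist 0 ((n / 2 : ℕ) : ZMod n) :=
          Nat.mul_le_mul_left 2 (hreach.dist_anti hupper)
  omega

/-- For `n ≥ 8` divisible by 4, the graph distance between the vertices `0` and `n / 2` in the
base graph (the `n`-cycle plus chords `{i, i + 2}` for `i ≡ 0, 1 (mod 4)`) is at least `n / 4`. -/
theorem stmt18 (n : ℕ) (hn : 8 ≤ n) (h4 : 4 ∣ n) :
    n / 4 ≤ (baseGraph n h4).dist 0 ((n / 2 : ℕ) : ZMod n) :=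
  stmt18_general n (circulantGraph_one_le_baseGraph h4) (baseGraph_le_circulantGraph_one_two h4)
end
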